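/- Let 0 ≤ θ ≤ 1/4 and for P ≥ 2 put M = P^θ, H = P·M^{−4} and Q = P·M^{−1}. Then for every ε > 0 there exist η > 0 and C > 0 such that for all P ≥ 2 and all R with 1 ≤ R ≤ P^η one has ∫₀¹ |E₀(α)|²·|f₀(α;2Q)|⁴ dα ≤ C·Q^{5+ε}. -/

import Mathlib

open MeasureTheory
open scoped Classical

/-- `e(α) = exp(2πiα)`. -/
noncomputable def eC (α : ℝ) : ℂ := Complex.exp (2 * Real.pi * Complex.I * α)

/-- With `M = P^θ`, `H = P M⁻⁴`, the exponential sum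
`E₀(α) = ∑_{1≤h≤H} ∑_{1≤l≤2P} ∑_{M<m₁<m₂≤MR} e(8α l h³ (m₁⁸ − m₂⁸))`. -/
noncomputable def E0 (P θ R α : ℝ) : ℂ :=
  ∑ h ∈ Finset.Icc (1 : ℤ) ⌊P / (P ^ θ) ^ 4⌋,
    ∑ l ∈ Finset.Icc (1 : ℤ) ⌊2 * P⌋,
      ∑ m₂ ∈ Finset.Icc (⌊P ^ θ⌋ + 1) ⌊P ^ θ * R⌋,
        ∑ m₁ ∈ Finset.Icc (⌊P ^ θ⌋ + 1) (m₂ - 1),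
          eC (8 * α * (l : ℝ) * (h : ℝ) ^ 3 * ((m₁ : ℝ) ^ 8 - (m₂ : ℝ) ^ 8))

/-- The classical quartic Weyl sum `f_δ(α; P) = ∑_{δP < x ≤ P} e(αx⁴)`. -/
noncomputable def fW (δ P α : ℝ) : ℂ :=
  ∑ x ∈ Finset.Icc (⌊δ * P⌋ + 1) ⌊P⌋, eC (α * (x : ℝ) ^ 4)

/-
Square out: `|E₀|² |f|⁴` is the square modulus of the sum of `e(α (ψ + x⁴ - y⁴))` over the
frequencies `ψ` of `E₀` and over `x, y ≤ 2Q`. Cauchy-Schwarz over the values of `x - y` costs a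
factor `O(Q)`, and by orthogonality what is left counts the solutions of `x - y = z - w`,
`x⁴ - y⁴ - (z⁴ - w⁴) = ψ' - ψ`. On the line `x - y = z - w` the quartic form splits as
`(x - y) (x - z) (3 (x + w)² + (x - y)² + (x - z)²)`. Hence `ψ ≠ ψ'` leaves only divisor-many
solutions, while `ψ = ψ'` leaves the `O(Q²)` diagonal ones and happens for divisor-many `ψ'` once
`ψ` is fixed. As `E₀` has `O(Q² R²)` terms, the divisor bound gives `O(Q^(5 + ε) R^(4 + ε))`,
and `η` is chosen so that the power of `R` is absorbed by `Q^ε`.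
-/

open Finset
open scoped Pointwise

section DivisorBound

variable {δ x : ℝ}

lemma natCast_add_one_le_mul_pow_rpow (hδ : 0 < δ) (hx : 2 ≤ x) (v : ℕ) :
    (v : ℝ) + 1 ≤ (1 + 1 / (δ * Real.log 2)) * (x ^ v) ^ δ := by
  set c := δ * Real.log 2 with hc_def
  have hc : 0 < c := mul_pos hδ (Real.log_pos one_lt_two)
  have two_pow_rpow : ((2 : ℝ) ^ v) ^ δ = Real.exp (v * c) := by
    rw [← Real.rpow_natCast, ← Real.rpow_mul zero_le_two, Real.rpow_def_of_pos two_pos, hc_def]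
    ring_nf
  calc (v : ℝ) + 1 ≤ (v + 1) + (v * c + 1 / c) := le_add_of_nonneg_right (by positivity)
    _ = (1 + 1 / c) * (v * c + 1) := by field_simp; ring
    _ ≤ (1 + 1 / c) * ((2 : ℝ) ^ v) ^ δ := by
        rw [two_pow_rpow]; gcongr; exact Real.add_one_le_exp _
    _ ≤ (1 + 1 / c) * (x ^ v) ^ δ := by gcongr

lemma natCast_add_one_le_pow_rpow (hx : 0 ≤ x) (hxδ : 2 ≤ x ^ δ) (v : ℕ) :
    (v : ℝ) + 1 ≤ (x ^ v) ^ δ :=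
  calc (v : ℝ) + 1 ≤ 2 ^ v := by exact_mod_cast v.lt_two_pow_self
    _ ≤ (x ^ δ) ^ v := by gcongr
    _ = (x ^ v) ^ δ := Real.rpow_pow_comm hx δ v

lemma natCast_add_one_le_ite_mul_pow_rpow (hδ : 0 < δ) (hx : 2 ≤ x) (v : ℕ) :
    (v : ℝ) + 1 ≤
      (if x < 2 ^ (1 / δ) then 1 + 1 / (δ * Real.log 2) else 1) * (x ^ v) ^ δ := by
  split_ifs with h
  · exact natCast_add_one_le_mul_pow_rpow hδ hx v
  · rw [one_mul]
    refine natCast_add_one_le_pow_rpow (by positivity) ?_ v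
    calc (2 : ℝ) = (2 ^ (1 / δ)) ^ δ := by
          rw [← Real.rpow_mul zero_le_two, one_div_mul_cancel hδ.ne', Real.rpow_one]
      _ ≤ x ^ δ := by gcongr; exact not_lt.mp h

lemma prod_pow_factorization_rpow (δ : ℝ) {n : ℕ} (hn : n ≠ 0) :
    ∏ p ∈ n.primeFactors, ((p : ℝ) ^ n.factorization p) ^ δ = (n : ℝ) ^ δ := by
  rw [Real.finsetProd_rpow _ _ fun p _ ↦ by positivity]
  congr 1
  exact_mod_cast Nat.prod_factorization_pow_eq_self hn

theorem exists_card_nat_divisors_le_mul_rpow (hδ : 0 < δ) :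
    ∃ K > (0 : ℝ), ∀ n : ℕ, n ≠ 0 → (#n.divisors : ℝ) ≤ K * (n : ℝ) ^ δ := by
  set y := (2 : ℝ) ^ (1 / δ)
  set A := 1 + 1 / (δ * Real.log 2)
  have hA : 1 ≤ A := le_add_of_nonneg_right (by positivity)
  refine ⟨A ^ ⌈y⌉₊, by positivity, fun n hn ↦ ?_⟩
  have few_small_primes : #(n.primeFactors.filter fun p : ℕ ↦ (p : ℝ) < y) ≤ ⌈y⌉₊ := by
    rw [← card_range ⌈y⌉₊]
    exact card_le_card fun p hp ↦ mem_range.mpr (Nat.lt_ceil.mpr (mem_filter.mp hp).2)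
  calc (#n.divisors : ℝ) = ∏ p ∈ n.primeFactors, ((n.factorization p : ℝ) + 1) := by
        rw [Nat.card_divisors hn]; push_cast; rfl
    _ ≤ ∏ p ∈ n.primeFactors,
          (if (p : ℝ) < y then A else 1) * ((p : ℝ) ^ n.factorization p) ^ δ := by
        refine prod_le_prod (fun _ _ ↦ by positivity) fun p hp ↦ ?_
        have hp2 : (2 : ℝ) ≤ p := by exact_mod_cast (Nat.prime_of_mem_primeFactors hp).two_le
        exact natCast_add_one_le_ite_mul_pow_rpow hδ hp2 _
    _ = A ^ #(n.primeFactors.filter fun p : ℕ ↦ (p : ℝ) < y) * (n : ℝ) ^ δ := by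
        rw [prod_mul_distrib, prod_pow_factorization_rpow δ hn, prod_ite, prod_const,
          prod_const_one, mul_one]
    _ ≤ A ^ ⌈y⌉₊ * (n : ℝ) ^ δ := by gcongr

lemma card_int_divisors (n : ℤ) : #n.divisors = 2 * #n.natAbs.divisors := by
  rw [Int.divisors, card_disjUnion, card_map, card_map, two_mul]

theorem exists_card_int_divisors_le_mul_rpow (hδ : 0 < δ) :
    ∃ K > (0 : ℝ), ∀ n : ℤ, n ≠ 0 → (#n.divisors : ℝ) ≤ K * (|n| : ℝ) ^ δ := by
  obtain ⟨K, hK, hdiv⟩ := exists_card_nat_divisors_le_mul_rpow hδ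
  refine ⟨2 * K, by positivity, fun n hn ↦ ?_⟩
  have := hdiv n.natAbs (Int.natAbs_ne_zero.mpr hn)
  rw [Nat.cast_natAbs, Int.cast_abs] at this
  rw [card_int_divisors, Nat.cast_mul, Nat.cast_two, mul_assoc]
  gcongr

end DivisorBound

section Orthogonality

lemma eC_add (a b : ℝ) : eC (a + b) = eC a * eC b := by
  rw [eC, eC, eC, ← Complex.exp_add]
  push_cast
  ring_nf

lemma conj_eC (a : ℝ) : starRingEnd ℂ (eC a) = eC (-a) := by
  simp [eC, ← Complex.exp_conj, Complex.conj_ofNat]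

@[fun_prop]
lemma continuous_eC : Continuous eC := by
  unfold eC
  fun_prop

lemma integral_eC_mul_intCast (n : ℤ) :
    ∫ α in (0 : ℝ)..1, eC (α * n) = if n = 0 then 1 else 0 := by
  split_ifs with hn
  · simp [hn, eC]
  · have hne : (2 * Real.pi * Complex.I * n : ℂ) ≠ 0 := by simp [hn, Real.pi_ne_zero]
    have eC_eq (α : ℝ) : eC (α * n) = Complex.exp (2 * Real.pi * Complex.I * n * α) := by
      rw [eC]; push_cast; ring_nf
    have exp_eq_one : Complex.exp (2 * Real.pi * Complex.I * n) = 1 :=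
      Complex.exp_eq_one_iff.mpr ⟨n, by ring⟩
    simp [eC_eq, integral_exp_mul_complex hne, exp_eq_one]

variable {ι γ : Type*}

lemma integral_norm_sum_eC_sq (S : Finset ι) (g : ι → ℤ) :
    ∫ α in (0 : ℝ)..1, ‖∑ s ∈ S, eC (α * g s)‖ ^ 2 = #{p ∈ S ×ˢ S | g p.1 = g p.2} := by
  have norm_sq_eq (α : ℝ) : ((‖∑ s ∈ S, eC (α * g s)‖ ^ 2 : ℝ) : ℂ) =
      ∑ p ∈ S ×ˢ S, eC (α * (g p.1 - g p.2 : ℤ)) := by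
    rw [Complex.ofReal_pow, ← Complex.mul_conj', map_sum, sum_mul_sum, sum_product]
    refine sum_congr rfl fun s _ ↦ sum_congr rfl fun t _ ↦ ?_
    rw [conj_eC, ← eC_add]
    push_cast
    ring_nf
  apply Complex.ofReal_injective
  rw [← intervalIntegral.integral_ofReal]
  simp_rw [norm_sq_eq]
  rw [intervalIntegral.integral_finsetSum
    fun p _ ↦ Continuous.intervalIntegrable (by fun_prop) _ _]
  simp_rw [integral_eC_mul_intCast, sub_eq_zero, sum_boole, Complex.ofReal_natCast]

lemma norm_sum_sq_le_card_mul_sum_fiberwise {E : Type*} [SeminormedAddCommGroup E]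
    [DecidableEq γ] {U : Finset ι} {K : Finset γ} {κ : ι → γ} (hκ : ∀ u ∈ U, κ u ∈ K)
    (f : ι → E) :
    ‖∑ u ∈ U, f u‖ ^ 2 ≤ #K * ∑ k ∈ K, ‖∑ u ∈ U with κ u = k, f u‖ ^ 2 := by
  rw [← sum_fiberwise_of_maps_to hκ]
  calc _ ≤ (∑ k ∈ K, ‖∑ u ∈ U with κ u = k, f u‖) ^ 2 := by gcongr; exact norm_sum_le _ _
    _ ≤ _ := sq_sum_le_card_mul_sum_sq

lemma integral_norm_sum_eC_sq_le_card_mul [DecidableEq γ] {U : Finset ι} {K : Finset γ}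
    {κ : ι → γ} (hκ : ∀ u ∈ U, κ u ∈ K) (g : ι → ℤ) :
    ∫ α in (0 : ℝ)..1, ‖∑ u ∈ U, eC (α * g u)‖ ^ 2 ≤
      #K * #{p ∈ U ×ˢ U | κ p.1 = κ p.2 ∧ g p.1 = g p.2} := by
  have card_fiberwise : #{p ∈ U ×ˢ U | κ p.1 = κ p.2 ∧ g p.1 = g p.2} =
      ∑ k ∈ K, #{p ∈ {u ∈ U | κ u = k} ×ˢ {u ∈ U | κ u = k} | g p.1 = g p.2} := by
    rw [card_eq_sum_card_fiberwise (f := fun p ↦ κ p.1) (t := K)]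
    · refine sum_congr rfl fun k _ ↦ congrArg card ?_
      ext p
      simp only [mem_filter, mem_product]
      grind
    · intro p hp
      exact hκ _ (mem_product.mp (mem_filter.mp hp).1).1
  calc _ ≤ ∫ α in (0 : ℝ)..1, #K * ∑ k ∈ K, ‖∑ u ∈ U with κ u = k, eC (α * g u)‖ ^ 2 :=
        intervalIntegral.integral_mono_on zero_le_one
          (Continuous.intervalIntegrable (by fun_prop) _ _)
          (Continuous.intervalIntegrable (by fun_prop) _ _)
          fun α _ ↦ norm_sum_sq_le_card_mul_sum_fiberwise hκ _
    _ = #K * ∑ k ∈ K, ∫ α in (0 : ℝ)..1, ‖∑ u ∈ U with κ u = k, eC (α * g u)‖ ^ 2 := by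
        rw [intervalIntegral.integral_const_mul, intervalIntegral.integral_finsetSum
          fun k _ ↦ Continuous.intervalIntegrable (by fun_prop) _ _]
    _ = _ := by simp_rw [integral_norm_sum_eC_sq, card_fiberwise, Nat.cast_sum]

end Orthogonality

section Differencing

variable {ι G : Type*}

lemma norm_sum_eC_sq_mul_norm_sum_eC_pow_four (S : Finset ι) (g : ι → ℤ) (A : Finset G)
    (φ : G → ℤ) (α : ℝ) :
    ‖∑ s ∈ S, eC (α * g s)‖ ^ 2 * ‖∑ a ∈ A, eC (α * φ a)‖ ^ 4 =
      ‖∑ u ∈ S ×ˢ (A ×ˢ A), eC (α * (g u.1 + (φ u.2.1 - φ u.2.2) : ℤ))‖ ^ 2 := by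
  set T := ∑ s ∈ S, eC (α * g s) with hT
  set F := ∑ a ∈ A, eC (α * φ a) with hF
  have mul_conj_eq : T * (F * starRingEnd ℂ F) =
      ∑ u ∈ S ×ˢ (A ×ˢ A), eC (α * (g u.1 + (φ u.2.1 - φ u.2.2) : ℤ)) := by
    rw [hT, hF, map_sum, sum_mul_sum, ← sum_product', sum_mul_sum, ← sum_product']
    refine sum_congr rfl fun u _ ↦ ?_
    rw [conj_eC, ← eC_add, ← eC_add]
    push_cast
    ring_nf
  rw [← mul_conj_eq, norm_mul, norm_mul, RCLike.norm_conj]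
  ring

variable [AddGroup G] [DecidableEq G]

/-- The solutions `((a, b), (c, d)) ∈ A⁴` of the system `a - b = c - d`,
`φ a - φ b - (φ c - φ d) = n`. Squaring out `|∑ e(α φ a)|⁴` would give the second equation only;
Weyl differencing adds the first one at the cost of a factor `#(A - A)`. -/
def differencedSolutions (φ : G → ℤ) (A : Finset G) (n : ℤ) : Finset ((G × G) × (G × G)) :=
  {q ∈ (A ×ˢ A) ×ˢ (A ×ˢ A) | q.1.1 - q.1.2 = q.2.1 - q.2.2 ∧
    φ q.1.1 - φ q.1.2 - (φ q.2.1 - φ q.2.2) = n}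

lemma card_pairs_eq_sum_card_differencedSolutions (S : Finset ι) (g : ι → ℤ) (A : Finset G)
    (φ : G → ℤ) :
    #{w ∈ (S ×ˢ (A ×ˢ A)) ×ˢ (S ×ˢ (A ×ˢ A)) | w.1.2.1 - w.1.2.2 = w.2.2.1 - w.2.2.2 ∧
        g w.1.1 + (φ w.1.2.1 - φ w.1.2.2) = g w.2.1 + (φ w.2.2.1 - φ w.2.2.2)} =
      ∑ s ∈ S, ∑ t ∈ S, #(differencedSolutions φ A (g t - g s)) := by
  simp only [differencedSolutions, card_filter]
  rw [sum_product, sum_product]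
  refine sum_congr rfl fun s _ ↦ ?_
  simp_rw [sum_product (s := S)]
  rw [sum_comm]
  refine sum_congr rfl fun t _ ↦ ?_
  rw [sum_product (s := A ×ˢ A) (t := A ×ˢ A)]
  refine sum_congr rfl fun p _ ↦ sum_congr rfl fun q _ ↦ ?_
  have phase_eq_iff : g s + (φ p.1 - φ p.2) = g t + (φ q.1 - φ q.2) ↔
      φ p.1 - φ p.2 - (φ q.1 - φ q.2) = g t - g s := by omega
  simp only [phase_eq_iff]

theorem integral_norm_sum_eC_sq_mul_norm_sum_eC_pow_four_le (S : Finset ι) (g : ι → ℤ)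
    (A : Finset G) (φ : G → ℤ) :
    ∫ α in (0 : ℝ)..1, ‖∑ s ∈ S, eC (α * g s)‖ ^ 2 * ‖∑ a ∈ A, eC (α * φ a)‖ ^ 4 ≤
      #(A - A) * ∑ s ∈ S, ∑ t ∈ S, (#(differencedSolutions φ A (g t - g s)) : ℝ) := by
  simp_rw [norm_sum_eC_sq_mul_norm_sum_eC_pow_four]
  refine (integral_norm_sum_eC_sq_le_card_mul (κ := fun u ↦ u.2.1 - u.2.2) (K := A - A)
    (fun u hu ↦ ?_) _).trans_eq ?_
  · have := mem_product.mp (mem_product.mp hu).2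
    exact sub_mem_sub this.1 this.2
  · rw [card_pairs_eq_sum_card_differencedSolutions]
    push_cast
    rfl

lemma sum_sum_sub_le_of_card_fiber_le {S : Finset ι} {g : ι → ℤ} {c : ℤ → ℝ} {D₀ D₁ D₂ : ℝ}
    (hD₀ : 0 ≤ D₀) (hD₂ : 0 ≤ D₂) (hfiber : ∀ s ∈ S, (#{t ∈ S | g t = g s} : ℝ) ≤ D₁)
    (hzero : c 0 ≤ D₀) (hne : ∀ n ≠ 0, c n ≤ D₂) :
    ∑ s ∈ S, ∑ t ∈ S, c (g t - g s) ≤ #S * (D₀ * D₁ + #S * D₂) := by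
  rw [← nsmul_eq_mul]
  refine sum_le_card_nsmul _ _ _ fun s hs ↦ ?_
  calc ∑ t ∈ S, c (g t - g s) ≤ ∑ t ∈ S, ((if g t = g s then D₀ else 0) + D₂) := by
        gcongr with t
        split_ifs with h
        · rw [h, sub_self]; linarith
        · rw [zero_add]; exact hne _ (sub_ne_zero.mpr h)
    _ = D₀ * #{t ∈ S | g t = g s} + #S * D₂ := by
        rw [sum_add_distrib, ← sum_filter, sum_const, sum_const, nsmul_eq_mul, nsmul_eq_mul,
          mul_comm D₀]
    _ ≤ D₀ * D₁ + #S * D₂ := by gcongr; exact hfiber s hs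

lemma abs_le_of_mem_differencedSolutions {φ : G → ℤ} {A : Finset G} {B n : ℤ}
    (hφ : ∀ a ∈ A, φ a ∈ Set.Icc 0 B) {q : (G × G) × (G × G)}
    (hq : q ∈ differencedSolutions φ A n) : |n| ≤ 2 * B := by
  simp only [differencedSolutions, mem_filter, mem_product] at hq
  obtain ⟨⟨⟨ha, hb⟩, hc, hd⟩, -, rfl⟩ := hq
  have := hφ _ ha; have := hφ _ hb; have := hφ _ hc; have := hφ _ hd
  simp only [Set.mem_Icc] at *
  rw [abs_le]
  omega

end Differencing

section Quartic

lemma pow_four_sub_sub_eq_mul {R : Type*} [CommRing R] {a b c d : R} (h : a - b = c - d) :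
    a ^ 4 - b ^ 4 - (c ^ 4 - d ^ 4) =
      (a - b) * ((a - c) * (3 * (a + d) ^ 2 + (a - b) ^ 2 + (a - c) ^ 2)) := by
  obtain rfl : d = c - a + b := by linear_combination h
  ring

variable {A : Finset ℤ}

lemma mem_differencedSolutions_pow_four {n a b c d : ℤ} :
    ((a, b), (c, d)) ∈ differencedSolutions (· ^ 4) A n ↔
      ((a ∈ A ∧ b ∈ A) ∧ c ∈ A ∧ d ∈ A) ∧ a - b = c - d ∧
        (a - b) * ((a - c) * (3 * (a + d) ^ 2 + (a - b) ^ 2 + (a - c) ^ 2)) = n := by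
  simp only [differencedSolutions, mem_filter, mem_product]
  refine and_congr_right fun _ ↦ and_congr_right fun h ↦ ?_
  rw [pow_four_sub_sub_eq_mul h]

-- A solution is recovered from the divisors `a - b` and `a - c` of `n`: together with `n` they
-- determine `(a + d)²`, hence `a + d`, as the elements of `A` are positive.
lemma card_differencedSolutions_pow_four_le (hA : ∀ a ∈ A, 0 < a) {n : ℤ} (hn : n ≠ 0) :
    #(differencedSolutions (· ^ 4) A n) ≤ #n.divisors ^ 2 := by
  rw [sq, ← card_product]
  refine card_le_card_of_injOn (fun q ↦ (q.1.1 - q.1.2, q.1.1 - q.2.1)) ?_ ?_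
  · rintro ⟨⟨a, b⟩, ⟨c, d⟩⟩ hq
    obtain ⟨-, -, hprod⟩ := mem_differencedSolutions_pow_four.mp hq
    simp only [coe_product, Set.mem_prod, mem_coe, Int.mem_divisors]
    exact ⟨⟨Dvd.intro _ hprod, hn⟩, ⟨(Dvd.intro _ rfl).trans (Dvd.intro_left _ hprod), hn⟩⟩
  · rintro ⟨⟨a, b⟩, ⟨c, d⟩⟩ hq ⟨⟨a', b'⟩, ⟨c', d'⟩⟩ hq' heq
    obtain ⟨⟨⟨ha, -⟩, -, hd⟩, hsub, hprod⟩ := mem_differencedSolutions_pow_four.mp hq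
    obtain ⟨⟨⟨ha', -⟩, -, hd'⟩, hsub', hprod'⟩ := mem_differencedSolutions_pow_four.mp hq'
    obtain ⟨hab, hac⟩ := Prod.mk.inj heq
    dsimp only at hab hac
    have hab0 : a - b ≠ 0 := left_ne_zero_of_mul (hprod ▸ hn)
    have hac0 : a - c ≠ 0 := left_ne_zero_of_mul (right_ne_zero_of_mul (hprod ▸ hn))
    rw [← hab, ← hac, ← hprod] at hprod'
    have cofactor_eq := mul_left_cancel₀ hac0 (mul_left_cancel₀ hab0 hprod')
    have sq_eq : (a' + d') ^ 2 = (a + d) ^ 2 := by linarith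
    have add_eq : a' + d' = a + d :=
      (pow_left_inj₀ (add_pos (hA _ ha') (hA _ hd')).le (add_pos (hA _ ha) (hA _ hd)).le
        two_ne_zero).mp sq_eq
    simp only [Prod.mk.injEq]
    omega

lemma card_differencedSolutions_pow_four_zero_le (hA : ∀ a ∈ A, 0 < a) :
    #(differencedSolutions (· ^ 4) A 0) ≤ 2 * #A ^ 2 := by
  have subset_diagonals : differencedSolutions (· ^ 4) A 0 ⊆
      (A ×ˢ A).image (fun p ↦ ((p.1, p.1), (p.2, p.2))) ∪
        (A ×ˢ A).image (fun p ↦ ((p.1, p.2), (p.1, p.2))) := by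
    rintro ⟨⟨a, b⟩, ⟨c, d⟩⟩ hq
    obtain ⟨⟨⟨ha, hb⟩, hc, hd⟩, hsub, hprod⟩ := mem_differencedSolutions_pow_four.mp hq
    have cofactor_pos : 0 < 3 * (a + d) ^ 2 + (a - b) ^ 2 + (a - c) ^ 2 := by
      have := add_pos (hA _ ha) (hA _ hd)
      positivity
    simp only [mem_union, mem_image, mem_product, Prod.exists, Prod.mk.injEq]
    rcases mul_eq_zero.mp hprod with hab | hprod
    · exact .inl ⟨a, c, ⟨ha, hc⟩, ⟨rfl, by omega⟩, rfl, by omega⟩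
    · have hac := (mul_eq_zero.mp hprod).resolve_right cofactor_pos.ne'
      exact .inr ⟨a, b, ⟨ha, hb⟩, ⟨rfl, rfl⟩, by omega, by omega⟩
  calc #(differencedSolutions (· ^ 4) A 0)
      ≤ #(A ×ˢ A) + #(A ×ˢ A) :=
        (card_le_card subset_diagonals).trans <|
          (card_union_le _ _).trans (add_le_add card_image_le card_image_le)
    _ = 2 * #A ^ 2 := by rw [card_product]; ring

theorem integral_norm_sum_eC_sq_mul_norm_sum_eC_quartic_le {ι : Type*} {S : Finset ι}
    {g : ι → ℤ} {B : ℤ} {D Y : ℝ} (hA : ∀ a ∈ A, 0 < a) (hAB : ∀ a ∈ A, a ^ 4 ≤ B)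
    (hfiber : ∀ s ∈ S, (#{t ∈ S | g t = g s} : ℝ) ≤ D)
    (hY : ∀ n : ℤ, n ≠ 0 → |n| ≤ 2 * B → (#n.divisors : ℝ) ≤ Y) :
    ∫ α in (0 : ℝ)..1, ‖∑ s ∈ S, eC (α * g s)‖ ^ 2 * ‖∑ a ∈ A, eC (α * (a : ℝ) ^ 4)‖ ^ 4 ≤
      #(A - A) * (#S * (2 * #A ^ 2 * D + #S * Y ^ 2)) := by
  have card_solutions_le (n : ℤ) (hn : n ≠ 0) :
      (#(differencedSolutions (· ^ 4) A n) : ℝ) ≤ Y ^ 2 := by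
    obtain hempty | ⟨q, hq⟩ := (differencedSolutions (· ^ 4) A n).eq_empty_or_nonempty
    · simp [hempty, sq_nonneg]
    · have hnB : |n| ≤ 2 * B := abs_le_of_mem_differencedSolutions
        (fun a ha ↦ ⟨pow_nonneg (hA a ha).le 4, hAB a ha⟩) hq
      calc (#(differencedSolutions (· ^ 4) A n) : ℝ) ≤ (#n.divisors : ℝ) ^ 2 := by
            exact_mod_cast card_differencedSolutions_pow_four_le hA hn
        _ ≤ Y ^ 2 := by gcongr; exact hY n hn hnB
  have card_trivial_le : (#(differencedSolutions (· ^ 4) A 0) : ℝ) ≤ 2 * #A ^ 2 := by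
    exact_mod_cast card_differencedSolutions_pow_four_zero_le hA
  calc _ ≤ #(A - A) * ∑ s ∈ S, ∑ t ∈ S,
          (#(differencedSolutions (· ^ 4) A (g t - g s)) : ℝ) := by
        simp only [← Int.cast_pow]
        exact integral_norm_sum_eC_sq_mul_norm_sum_eC_pow_four_le S g A (· ^ 4)
    _ ≤ _ := by
        refine mul_le_mul_of_nonneg_left ?_ (Nat.cast_nonneg _)
        exact sum_sum_sub_le_of_card_fiber_le
          (c := fun n ↦ (#(differencedSolutions (· ^ 4) A n) : ℝ))
          (by positivity) (by positivity) hfiber card_trivial_le card_solutions_le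

end Quartic

section IntegerIntervals

lemma card_Icc_one_floor_le {x : ℝ} (hx : 0 ≤ x) : (#(Icc 1 ⌊x⌋) : ℝ) ≤ x := by
  rw [Int.card_Icc, add_sub_cancel_right, Int.floor_toNat]
  exact Nat.floor_le hx

lemma card_Icc_one_sub_Icc_one_le (N : ℤ) : #(Icc 1 N - Icc 1 N) ≤ 2 * #(Icc 1 N) := by
  have differences_subset : Icc 1 N - Icc 1 N ⊆ Icc (1 - N) (N - 1) := by
    intro k hk
    obtain ⟨a, ha, b, hb, rfl⟩ := mem_sub.mp hk
    rw [mem_Icc] at *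
    omega
  refine (card_le_card differences_subset).trans ?_
  rw [Int.card_Icc, Int.card_Icc]
  omega

end IntegerIntervals

section E0

/-- The frequency `8 l h³ (m₁⁸ - m₂⁸)` of the term of `E0` indexed by `(h, l, m₂, m₁)`. -/
def E0Phase (q : ℤ × ℤ × ℤ × ℤ) : ℤ :=
  8 * q.2.1 * q.1 ^ 3 * (q.2.2.2 ^ 8 - q.2.2.1 ^ 8)

/-- The tuples `(h, l, m₂, m₁)`, in the order of summation of `E0`, with `1 ≤ h ≤ H`,
`1 ≤ l ≤ L` and `M < m₁ < m₂ ≤ N`. -/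
noncomputable def E0Index (H L M N : ℝ) : Finset (ℤ × ℤ × ℤ × ℤ) :=
  {q ∈ Icc 1 ⌊H⌋ ×ˢ Icc 1 ⌊L⌋ ×ˢ Icc (⌊M⌋ + 1) ⌊N⌋ ×ˢ Icc (⌊M⌋ + 1) ⌊N⌋ | q.2.2.2 < q.2.2.1}

lemma E0_eq_sum_E0Index (P θ R α : ℝ) :
    E0 P θ R α =
      ∑ q ∈ E0Index (P / (P ^ θ) ^ 4) (2 * P) (P ^ θ) (P ^ θ * R), eC (α * E0Phase q) := by
  simp only [E0, E0Index, sum_filter, sum_product]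
  refine sum_congr rfl fun h _ ↦ sum_congr rfl fun l _ ↦ sum_congr rfl fun m₂ hm₂ ↦ ?_
  have filter_lt_eq : {m₁ ∈ Icc (⌊P ^ θ⌋ + 1) ⌊P ^ θ * R⌋ | m₁ < m₂} =
      Icc (⌊P ^ θ⌋ + 1) (m₂ - 1) := by
    ext m₁
    simp only [mem_filter, mem_Icc] at hm₂ ⊢
    omega
  rw [← filter_lt_eq, sum_filter]
  refine sum_congr rfl fun m₁ _ ↦ ?_
  rw [E0Phase]
  push_cast
  ring_nf

-- `h`, `l`, `m₁ - m₂` and `m₁ + m₂` divide the frequency, and they determine `(h, l, m₂, m₁)`.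
lemma card_filter_E0Phase_eq_le (T : Finset (ℤ × ℤ × ℤ × ℤ)) {v : ℤ} (hv : v ≠ 0) :
    #{q ∈ T | E0Phase q = v} ≤ #v.divisors ^ 4 := by
  calc _ ≤ #(v.divisors ×ˢ v.divisors ×ˢ v.divisors ×ˢ v.divisors) := by
        refine card_le_card_of_injOn
          (fun q ↦ (q.1, q.2.1, q.2.2.2 - q.2.2.1, q.2.2.2 + q.2.2.1)) ?_ ?_
        · rintro ⟨h, l, m₂, m₁⟩ hq
          obtain ⟨-, rfl⟩ := mem_filter.mp hq
          simp only [coe_product, Set.mem_prod, mem_coe, Int.mem_divisors]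
          refine ⟨⟨⟨8 * l * h ^ 2 * (m₁ ^ 8 - m₂ ^ 8), ?_⟩, hv⟩,
            ⟨⟨8 * h ^ 3 * (m₁ ^ 8 - m₂ ^ 8), ?_⟩, hv⟩,
            ⟨⟨8 * l * h ^ 3 * ((m₁ + m₂) * (m₁ ^ 2 + m₂ ^ 2) * (m₁ ^ 4 + m₂ ^ 4)), ?_⟩, hv⟩,
            ⟨⟨8 * l * h ^ 3 * ((m₁ - m₂) * (m₁ ^ 2 + m₂ ^ 2) * (m₁ ^ 4 + m₂ ^ 4)), ?_⟩, hv⟩⟩ <;>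
          · rw [E0Phase]; ring
        · rintro ⟨h, l, m₂, m₁⟩ - ⟨h', l', m₂', m₁'⟩ - heq
          simp only [Prod.mk.injEq] at heq ⊢
          omega
    _ = #v.divisors ^ 4 := by simp only [card_product]; ring

variable {H L M N : ℝ}

lemma card_E0Index_le (hH : 0 ≤ H) (hL : 0 ≤ L) (hM : 0 ≤ M) (hN : 0 ≤ N) :
    (#(E0Index H L M N) : ℝ) ≤ H * L * N ^ 2 := by
  have index_subset : E0Index H L M N ⊆ Icc 1 ⌊H⌋ ×ˢ Icc 1 ⌊L⌋ ×ˢ Icc 1 ⌊N⌋ ×ˢ Icc 1 ⌊N⌋ := by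
    have hM1 : 1 ≤ ⌊M⌋ + 1 := by linarith [Int.floor_nonneg.mpr hM]
    refine (filter_subset _ _).trans ?_
    gcongr
  calc (#(E0Index H L M N) : ℝ)
      ≤ #(Icc 1 ⌊H⌋) * (#(Icc 1 ⌊L⌋) * (#(Icc 1 ⌊N⌋) * #(Icc 1 ⌊N⌋))) := by
        exact_mod_cast (card_le_card index_subset).trans_eq (by simp only [card_product])
    _ ≤ H * (L * (N * N)) := by gcongr <;> exact card_Icc_one_floor_le ‹_›
    _ = H * L * N ^ 2 := by ring

lemma bounds_of_mem_E0Index (hM : 0 ≤ M) {h l m₂ m₁ : ℤ} (hq : (h, l, m₂, m₁) ∈ E0Index H L M N) :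
    (0 < h ∧ (h : ℝ) ≤ H) ∧ (0 < l ∧ (l : ℝ) ≤ L) ∧ (0 < m₁ ∧ m₁ < m₂ ∧ (m₂ : ℝ) ≤ N) := by
  have hM0 : 0 ≤ ⌊M⌋ := Int.floor_nonneg.mpr hM
  simp only [E0Index, mem_filter, mem_product, mem_Icc, Int.le_floor] at hq
  obtain ⟨⟨⟨hh, hhH⟩, ⟨hl, hlL⟩, ⟨-, hm₂N⟩, ⟨hm₁, -⟩⟩, hlt⟩ := hq
  exact ⟨⟨by omega, hhH⟩, ⟨by omega, hlL⟩, by omega, hlt, hm₂N⟩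

lemma E0Phase_ne_zero_of_mem_E0Index (hM : 0 ≤ M) {q : ℤ × ℤ × ℤ × ℤ}
    (hq : q ∈ E0Index H L M N) : E0Phase q ≠ 0 := by
  obtain ⟨h, l, m₂, m₁⟩ := q
  obtain ⟨⟨hh, -⟩, ⟨hl, -⟩, hm₁, hlt, -⟩ := bounds_of_mem_E0Index hM hq
  have pow_lt : m₁ ^ 8 < m₂ ^ 8 := pow_lt_pow_left₀ hlt hm₁.le (by norm_num)
  exact mul_ne_zero (by positivity) (sub_neg.mpr pow_lt).ne

lemma abs_E0Phase_le_of_mem_E0Index (hM : 0 ≤ M) {q : ℤ × ℤ × ℤ × ℤ}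
    (hq : q ∈ E0Index H L M N) : (|E0Phase q| : ℝ) ≤ 8 * L * H ^ 3 * N ^ 8 := by
  obtain ⟨h, l, m₂, m₁⟩ := q
  obtain ⟨⟨hh, hhH⟩, ⟨hl, hlL⟩, hm₁, hlt, hm₂N⟩ := bounds_of_mem_E0Index hM hq
  have hm₂ : 0 < m₂ := hm₁.trans hlt
  have pow_lt : m₁ ^ 8 < m₂ ^ 8 := pow_lt_pow_left₀ hlt hm₁.le (by norm_num)
  have abs_le_int : |E0Phase (h, l, m₂, m₁)| ≤ 8 * l * h ^ 3 * m₂ ^ 8 := by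
    rw [E0Phase, abs_mul, abs_of_pos (by positivity : 0 < 8 * l * h ^ 3),
      abs_of_neg (sub_neg.mpr pow_lt), neg_sub]
    gcongr
    exact sub_le_self _ (by positivity)
  calc (|E0Phase (h, l, m₂, m₁)| : ℝ) ≤ 8 * l * h ^ 3 * m₂ ^ 8 := by exact_mod_cast abs_le_int
    _ ≤ 8 * L * H ^ 3 * N ^ 8 := by
        have : (0 : ℝ) ≤ l := by exact_mod_cast hl.le
        have : (0 : ℝ) ≤ h := by exact_mod_cast hh.le
        have : (0 : ℝ) ≤ m₂ := by exact_mod_cast hm₂.le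
        have hL : 0 ≤ L := by linarith
        have hH : 0 ≤ H := by linarith
        gcongr

lemma fW_zero (X α : ℝ) : fW 0 X α = ∑ x ∈ Icc 1 ⌊X⌋, eC (α * (x : ℝ) ^ 4) := by
  simp [fW]

end E0

section MeanValue

lemma card_filter_E0Phase_eq_le_of_mem {H L M N Y : ℝ} (hM : 0 ≤ M)
    (hY : ∀ n : ℤ, n ≠ 0 → (|n| : ℝ) ≤ 8 * L * H ^ 3 * N ^ 8 → (#n.divisors : ℝ) ≤ Y)
    {q : ℤ × ℤ × ℤ × ℤ} (hq : q ∈ E0Index H L M N) :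
    (#{t ∈ E0Index H L M N | E0Phase t = E0Phase q} : ℝ) ≤ Y ^ 4 := by
  have hne := E0Phase_ne_zero_of_mem_E0Index hM hq
  calc _ ≤ (#(E0Phase q).divisors : ℝ) ^ 4 := by
        exact_mod_cast card_filter_E0Phase_eq_le _ hne
    _ ≤ Y ^ 4 := by gcongr; exact hY _ hne (abs_E0Phase_le_of_mem_E0Index hM hq)

lemma integral_norm_sum_E0Index_sq_mul_fW_pow_four_le {H L M N X Y Z : ℝ} (hH : 0 ≤ H)
    (hL : 0 ≤ L) (hM : 0 ≤ M) (hN : 0 ≤ N) (hX : 0 ≤ X) (hZ : 8 * L * H ^ 3 * N ^ 8 ≤ Z)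
    (hXZ : 2 * X ^ 4 ≤ Z)
    (hY : ∀ n : ℤ, n ≠ 0 → (|n| : ℝ) ≤ Z → (#n.divisors : ℝ) ≤ Y) :
    ∫ α in (0 : ℝ)..1,
        ‖∑ q ∈ E0Index H L M N, eC (α * E0Phase q)‖ ^ 2 * ‖fW 0 X α‖ ^ 4 ≤
      2 * X * (H * L * N ^ 2 * (2 * X ^ 2 * Y ^ 4 + H * L * N ^ 2 * Y ^ 2)) := by
  simp_rw [fW_zero]
  have hNX : (⌊X⌋ : ℝ) ≤ X := Int.floor_le X
  have card_interval_le : (#(Icc 1 ⌊X⌋) : ℝ) ≤ X := card_Icc_one_floor_le hX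
  have card_differences_le : (#(Icc 1 ⌊X⌋ - Icc 1 ⌊X⌋) : ℝ) ≤ 2 * X := by
    calc (#(Icc 1 ⌊X⌋ - Icc 1 ⌊X⌋) : ℝ) ≤ 2 * #(Icc 1 ⌊X⌋) := by
          exact_mod_cast card_Icc_one_sub_Icc_one_le ⌊X⌋
      _ ≤ 2 * X := by gcongr
  have card_index_le := card_E0Index_le hH hL hM hN
  refine (integral_norm_sum_eC_sq_mul_norm_sum_eC_quartic_le (A := Icc 1 ⌊X⌋) (B := ⌊X⌋ ^ 4)
    (D := Y ^ 4) (Y := Y) (fun a ha ↦ (mem_Icc.mp ha).1) (fun a ha ↦ ?_) (fun q hq ↦ ?_)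
    fun n hn hnX ↦ ?_).trans ?_
  · obtain ⟨ha1, haX⟩ := mem_Icc.mp ha
    gcongr
  · exact card_filter_E0Phase_eq_le_of_mem hM (fun n hn hnZ ↦ hY n hn (hnZ.trans hZ)) hq
  · refine hY n hn ?_
    calc (|n| : ℝ) ≤ 2 * (⌊X⌋ : ℝ) ^ 4 := by exact_mod_cast hnX
      _ ≤ 2 * X ^ 4 := by gcongr
      _ ≤ Z := hXZ
  · gcongr

lemma integral_E0_sq_mul_fW_pow_four_le_of_card_divisors_le {P θ R Q Y : ℝ} (hP : 0 < P)
    (hQP : P / P ^ θ = Q) (hQ : 0 < Q) (hR : 1 ≤ R) (hY : 1 ≤ Y)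
    (hdiv : ∀ n : ℤ, n ≠ 0 → (|n| : ℝ) ≤ 32 * Q ^ 4 * R ^ 8 → (#n.divisors : ℝ) ≤ Y) :
    ∫ α in (0 : ℝ)..1, ‖E0 P θ R α‖ ^ 2 * ‖fW 0 (2 * Q) α‖ ^ 4 ≤
      80 * Q ^ 5 * R ^ 4 * Y ^ 4 := by
  simp_rw [E0_eq_sum_E0Index]
  have hM : 0 < P ^ θ := Real.rpow_pos_of_pos hP θ
  set M := P ^ θ
  have hPQ : P = Q * M := by rw [← hQP, div_mul_cancel₀ _ hM.ne']
  have card_eq : P / M ^ 4 * (2 * P) * (M * R) ^ 2 = 2 * Q ^ 2 * R ^ 2 := by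
    rw [hPQ]; field_simp
  have frequency_eq : 8 * (2 * P) * (P / M ^ 4) ^ 3 * (M * R) ^ 8 = 16 * Q ^ 4 * R ^ 8 := by
    rw [hPQ]; field_simp; ring
  have hR8 : 1 ≤ R ^ 8 := one_le_pow₀ hR
  refine (integral_norm_sum_E0Index_sq_mul_fW_pow_four_le (Z := 32 * Q ^ 4 * R ^ 8)
    (by positivity) (by positivity) hM.le (by positivity) (by positivity) ?_ ?_ hdiv).trans ?_
  · rw [frequency_eq]
    gcongr
    norm_num
  · calc 2 * (2 * Q) ^ 4 = 32 * Q ^ 4 * 1 := by ring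
      _ ≤ 32 * Q ^ 4 * R ^ 8 := by gcongr
  · rw [card_eq]
    have hR2 : 1 ≤ R ^ 2 := one_le_pow₀ hR
    have hY2 : 1 ≤ Y ^ 2 := one_le_pow₀ hY
    calc _ = 64 * Q ^ 5 * R ^ 2 * Y ^ 4 * 1 + 16 * Q ^ 5 * R ^ 4 * Y ^ 2 * 1 := by ring
      _ ≤ 64 * Q ^ 5 * R ^ 2 * Y ^ 4 * R ^ 2 + 16 * Q ^ 5 * R ^ 4 * Y ^ 2 * Y ^ 2 := by gcongr
      _ = 80 * Q ^ 5 * R ^ 4 * Y ^ 4 := by ring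

theorem exists_integral_E0_sq_mul_fW_pow_four_le {ε : ℝ} (hε : 0 < ε) :
    ∃ C > (0 : ℝ), ∀ P θ R : ℝ, 0 < P → 1 ≤ P / P ^ θ → 1 ≤ R →
      ∫ α in (0 : ℝ)..1, ‖E0 P θ R α‖ ^ 2 * ‖fW 0 (2 * (P / P ^ θ)) α‖ ^ 4 ≤
        C * (P / P ^ θ) ^ (5 + ε) * R ^ (4 + 2 * ε) := by
  obtain ⟨K, hK, hdiv⟩ := exists_card_int_divisors_le_mul_rpow (δ := ε / 16) (by positivity)
  refine ⟨80 * K ^ 4 * 32 ^ (ε / 4), by positivity, fun P θ R hP hQ hR ↦ ?_⟩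
  set Q := P / P ^ θ with hQ_def
  have hQ0 : 0 < Q := one_pos.trans_le hQ
  have hR0 : 0 < R := one_pos.trans_le hR
  set Z := 32 * Q ^ 4 * R ^ 8 with hZ_def
  set Y := K * Z ^ (ε / 16) with hY_def
  have card_divisors_le (n : ℤ) (hn : n ≠ 0) (hnZ : (|n| : ℝ) ≤ Z) : (#n.divisors : ℝ) ≤ Y :=
    calc (#n.divisors : ℝ) ≤ K * (|n| : ℝ) ^ (ε / 16) := hdiv n hn
      _ ≤ K * Z ^ (ε / 16) := by gcongr
  have hZ : 1 ≤ Z := by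
    have hQ4 : 1 ≤ Q ^ 4 := one_le_pow₀ hQ
    have hR8 : 1 ≤ R ^ 8 := one_le_pow₀ hR
    nlinarith [one_le_mul_of_one_le_of_one_le hQ4 hR8]
  have hY : 1 ≤ Y :=
    calc (1 : ℝ) ≤ #(1 : ℤ).divisors := by exact_mod_cast card_pos.mpr ⟨1, by simp⟩
      _ ≤ Y := card_divisors_le 1 one_ne_zero (by simpa using hZ)
  have pow_Y : Y ^ 4 = K ^ 4 * (32 ^ (ε / 4) * Q ^ ε * R ^ (2 * ε)) := by
    have rpow_Z : (Z ^ (ε / 16)) ^ 4 = Z ^ (ε / 4) := by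
      rw [← Real.rpow_natCast, ← Real.rpow_mul (by positivity)]
      ring_nf
    rw [hY_def, mul_pow, rpow_Z, hZ_def, Real.mul_rpow (by positivity) (by positivity),
      Real.mul_rpow (by positivity) (by positivity), ← Real.rpow_natCast Q, ← Real.rpow_natCast R,
      ← Real.rpow_mul hQ0.le, ← Real.rpow_mul hR0.le]
    ring_nf
  refine (integral_E0_sq_mul_fW_pow_four_le_of_card_divisors_le hP hQ_def.symm hQ0 hR hY
    card_divisors_le).trans_eq ?_
  rw [pow_Y, Real.rpow_add hQ0, Real.rpow_add hR0, Real.rpow_ofNat, Real.rpow_ofNat]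
  ring

end MeanValue

theorem stmt4_general {θ₀ : ℝ} (hθ₀ : θ₀ < 1) {ε : ℝ} (hε : 0 < ε) :
    ∃ η > (0 : ℝ), ∃ C > (0 : ℝ), ∀ θ ≤ θ₀, ∀ P : ℝ, 1 ≤ P → ∀ R : ℝ, 1 ≤ R → R ≤ P ^ η →
      ∫ α in (0 : ℝ)..1, ‖E0 P θ R α‖ ^ 2 * ‖fW 0 (2 * (P / P ^ θ)) α‖ ^ 4 ≤
        C * (P / P ^ θ) ^ (5 + ε) := by
  obtain ⟨C, hC, integral_le⟩ := exists_integral_E0_sq_mul_fW_pow_four_le (half_pos hε)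
  have hη : 0 < (1 - θ₀) * (ε / 2) / (4 + ε) :=
    div_pos (mul_pos (sub_pos.mpr hθ₀) (half_pos hε)) (by positivity)
  refine ⟨(1 - θ₀) * (ε / 2) / (4 + ε), hη, C, hC, fun θ hθ P hP R hR hRP ↦ ?_⟩
  have hP0 : 0 < P := one_pos.trans_le hP
  have Q_eq : P / P ^ θ = P ^ (1 - θ) := by rw [Real.rpow_sub hP0, Real.rpow_one]
  have hQ : 1 ≤ P / P ^ θ := by
    rw [Q_eq]
    exact Real.one_le_rpow hP (by linarith)
  set Q := P / P ^ θ
  have rpow_P_le : P ^ (1 - θ₀) ≤ Q := by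
    rw [Q_eq]
    exact Real.rpow_le_rpow_of_exponent_le hP (by linarith)
  have rpow_R_le : R ^ (4 + ε) ≤ Q ^ (ε / 2) :=
    calc R ^ (4 + ε) ≤ (P ^ ((1 - θ₀) * (ε / 2) / (4 + ε))) ^ (4 + ε) := by gcongr
      _ = (P ^ (1 - θ₀)) ^ (ε / 2) := by
          rw [← Real.rpow_mul hP0.le, ← Real.rpow_mul hP0.le, div_mul_cancel₀ _ (by positivity)]
      _ ≤ Q ^ (ε / 2) := by gcongr
  calc _ ≤ C * Q ^ (5 + ε / 2) * R ^ (4 + 2 * (ε / 2)) := integral_le P θ R hP0 hQ hR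
    _ ≤ C * Q ^ (5 + ε / 2) * Q ^ (ε / 2) := by
        rw [mul_div_cancel₀ ε two_ne_zero]
        gcongr
    _ = C * Q ^ (5 + ε) := by
        rw [mul_assoc, ← Real.rpow_add (by positivity), add_assoc, add_halves]

theorem stmt4 (θ : ℝ) (hθ0 : 0 ≤ θ) (hθ1 : θ ≤ 1 / 4) :
    ∀ ε > (0 : ℝ), ∃ η > (0 : ℝ), ∃ C > (0 : ℝ),
      ∀ P : ℝ, 2 ≤ P → ∀ R : ℝ, 1 ≤ R → R ≤ P ^ η →
        (∫ α in (0:ℝ)..1, ‖E0 P θ R α‖ ^ 2 * ‖fW 0 (2 * (P / P ^ θ)) α‖ ^ 4)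
          ≤ C * (P / P ^ θ) ^ ((5 : ℝ) + ε) := by
  intro ε hε
  obtain ⟨η, hη, C, hC, integral_le⟩ := stmt4_general (θ₀ := 1 / 4) (by norm_num) hε
  exact ⟨η, hη, C, hC, fun P hP ↦ integral_le θ hθ1 P (one_le_two.trans hP)⟩
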